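/- For every 0<α<1 there exists a constant C=C(α)>0 such that for every f∈C*^{1,α}(ℝ) and every weight Φ∈W⁰, the principal value limit defining T_Φ(f)(s) exists for every s∈ℝ and ‖T_Φ(f)‖₀* ≤ C·⦀Φ⦀₀·‖f‖_{1,α}*. -/

import Mathlib

open MeasureTheory Filter Topology Set
open scoped ENNReal

noncomputable section

/-- Weighted sup norm `‖f‖₀* = sup_s (1+|s|^{1+α})|f(s)|`. -/
def wSup (α : ℝ) (f : ℝ → ℝ) : ℝ≥0∞ :=
  ⨆ s : ℝ, ENNReal.ofReal ((1 + |s| ^ (1 + α)) * |f s|)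

/-- Weighted Hölder seminorm `[f]_α*`. -/
def wHolder (α : ℝ) (f : ℝ → ℝ) : ℝ≥0∞ :=
  ⨆ s : ℝ, ⨆ ξ : {ξ : ℝ // 0 < |ξ| ∧ |ξ| ≤ 1},
    ENNReal.ofReal ((1 + |s| ^ (1 + α)) * |f (s - ξ.1) - f s| / |ξ.1| ^ α)

/-- Weighted norm `‖f‖_{k,α}*`. -/
def wNorm (α : ℝ) (k : ℕ) (f : ℝ → ℝ) : ℝ≥0∞ :=
  (⨆ s : ℝ, ⨆ j : Fin (k + 1),
      ENNReal.ofReal ((1 + |s| ^ (1 + α)) * |iteratedDeriv j.1 f s|))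
    + wHolder α (iteratedDeriv k f)

/-- Membership in the weighted Hölder space `C*^{k,α}(ℝ)`. -/
def CStar (α : ℝ) (k : ℕ) (f : ℝ → ℝ) : Prop :=
  ContDiff ℝ k f ∧ wNorm α k f < ⊤

/-- Truncated singular integral defining `T_Φ(g)(s)`; the operator value is its
limit as `R → ∞`. -/
def TInt (Φ : ℝ → ℝ → ℝ) (g : ℝ → ℝ) (s R : ℝ) : ℝ :=
  (1 / (2 * Real.pi)) * ∫ ξ in (-R)..R, ((deriv g (s - ξ) - deriv g s) / ξ) * Φ ξ s

/-- `Φ̄ = ξ(Φ - Φ^∞)`. -/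
def barW (Φ : ℝ → ℝ → ℝ) (Φinf : ℝ → ℝ) (ξ s : ℝ) : ℝ := ξ * (Φ ξ s - Φinf s)

/-- `Φ̃ = ξ∂_ξΦ - Φ`. -/
def tildeW (Φ : ℝ → ℝ → ℝ) (ξ s : ℝ) : ℝ := ξ * deriv (fun ξ' => Φ ξ' s) ξ - Φ ξ s

/-- The weight norm `⦀Φ⦀₀` (relative to the far field `Φinf = Φ^∞`). -/
def WNorm0 (Φ : ℝ → ℝ → ℝ) (Φinf : ℝ → ℝ) : ℝ≥0∞ :=
  (⨆ s : ℝ, ⨆ ξ : {ξ : ℝ // 0 < |ξ| ∧ |ξ| ≤ 1}, ENNReal.ofReal |Φ ξ.1 s|)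
    + ⨆ s : ℝ, ⨆ ξ : {ξ : ℝ // 1 < |ξ|},
        ENNReal.ofReal (|barW Φ Φinf ξ.1 s| + |tildeW Φ ξ.1 s|)

/-- Membership `Φ ∈ W⁰`, with far field `Φinf`. -/
def MemW0 (Φ : ℝ → ℝ → ℝ) (Φinf : ℝ → ℝ) : Prop :=
  (∀ s, ContDiffOn ℝ 1 (fun ξ => Φ ξ s) {(0 : ℝ)}ᶜ) ∧
  (∀ s, Tendsto (fun ξ => Φ ξ s) (cocompact ℝ) (𝓝 (Φinf s))) ∧
  WNorm0 Φ Φinf < ⊤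

/-- The weight `1 + |s|^{1+α}`. -/
def wgt (α s : ℝ) : ℝ := 1 + |s| ^ (1 + α)

lemma wgt_pos (α s : ℝ) : 0 < wgt α s := by
  unfold wgt; positivity

lemma one_le_wgt (α s : ℝ) : 1 ≤ wgt α s := by
  unfold wgt
  have : 0 ≤ |s| ^ (1 + α) := by positivity
  linarith

lemma wgt_neg (α s : ℝ) : wgt α (-s) = wgt α s := by
  unfold wgt; rw [abs_neg]

lemma continuous_wgt {α : ℝ} (h0 : 0 < α) : Continuous (wgt α) := by
  unfold wgt
  refine continuous_const.add (continuous_abs.rpow_const ?_)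
  intro x; right; linarith

lemma add_rpow_le {α a b : ℝ} (h0 : 0 < α) (h1 : α < 1) (ha : 0 ≤ a) (hb : 0 ≤ b) :
    (a + b) ^ (1 + α) ≤ 4 * (a ^ (1 + α) + b ^ (1 + α)) := by
  have h2 : (2 : ℝ) ^ (1 + α) ≤ 4 := by
    calc (2 : ℝ) ^ (1 + α) ≤ 2 ^ (2 : ℝ) :=
          Real.rpow_le_rpow_of_exponent_le (by norm_num) (by linarith)
      _ = 4 := by norm_num
  have key : ∀ c : ℝ, 0 ≤ c → a + b ≤ 2 * c → (a + b) ^ (1 + α) ≤ 4 * c ^ (1 + α) := by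
    intro c hc h
    calc (a + b) ^ (1 + α) ≤ (2 * c) ^ (1 + α) :=
          Real.rpow_le_rpow (by positivity) h (by linarith)
      _ = 2 ^ (1 + α) * c ^ (1 + α) := Real.mul_rpow (by norm_num) hc
      _ ≤ 4 * c ^ (1 + α) := by gcongr
  have hA : 0 ≤ a ^ (1 + α) := by positivity
  have hB : 0 ≤ b ^ (1 + α) := by positivity
  rcases le_total a b with h | h
  · have := key b hb (by linarith); linarith
  · have := key a ha (by linarith); linarith

lemma wgt_le {α : ℝ} (h0 : 0 < α) (h1 : α < 1) (s ξ : ℝ) :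
    wgt α s ≤ 4 * (wgt α (s - ξ) + |ξ| ^ (1 + α)) := by
  have h : |s| ≤ |s - ξ| + |ξ| := by
    calc |s| = |(s - ξ) + ξ| := by ring_nf
      _ ≤ _ := abs_add_le _ _
  have h3 : |s| ^ (1 + α) ≤ 4 * (|s - ξ| ^ (1 + α) + |ξ| ^ (1 + α)) :=
    (Real.rpow_le_rpow (abs_nonneg _) h (by linarith)).trans
      (add_rpow_le h0 h1 (abs_nonneg _) (abs_nonneg _))
  unfold wgt
  linarith

lemma integrable_inv_wgt {α : ℝ} (h0 : 0 < α) (h1 : α < 1) :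
    Integrable (fun x => (wgt α x)⁻¹) := by
  have hI : Integrable (fun x : ℝ => 4 * (1 + ‖x‖) ^ (-(1 + α))) :=
    (integrable_one_add_norm (by simp; exact h0)).const_mul 4
  refine hI.mono' ?_ ?_
  · exact ((continuous_wgt h0).inv₀ (fun x => (wgt_pos α x).ne')).aestronglyMeasurable
  · refine Eventually.of_forall fun x => ?_
    have hp : 0 < wgt α x := wgt_pos α x
    have := add_rpow_le h0 h1 (zero_le_one) (abs_nonneg x)
    rw [Real.one_rpow] at this
    rw [Real.norm_of_nonneg (by positivity), Real.rpow_neg (by positivity), Real.norm_eq_abs]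
    have hq : 0 < (1 + |x|) ^ (1 + α) := by positivity
    rw [← div_eq_mul_inv, ← one_div, div_le_div_iff₀ hp hq]
    unfold wgt
    linarith

lemma kernel_bound {α : ℝ} (h0 : 0 < α) (h1 : α < 1) (s ξ : ℝ) (hξ : 1 ≤ ξ) :
    wgt α s * ((wgt α (s - ξ))⁻¹ * ξ ^ (-2 : ℝ)) ≤ 4 * ξ ^ (-2 : ℝ) + 4 * (wgt α (s - ξ))⁻¹ := by
  have hp := wgt_pos α (s - ξ)
  have hx : 0 < ξ := by linarith
  have h := wgt_le h0 h1 s ξ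
  rw [abs_of_pos hx] at h
  have h2 : ξ ^ (1 + α) * ξ ^ (-2 : ℝ) ≤ 1 := by
    rw [← Real.rpow_add hx]
    exact Real.rpow_le_one_of_one_le_of_nonpos hξ (by linarith)
  have hq : 0 < ξ ^ (-2 : ℝ) := by positivity
  calc wgt α s * ((wgt α (s - ξ))⁻¹ * ξ ^ (-2 : ℝ))
      ≤ (4 * (wgt α (s - ξ) + ξ ^ (1 + α))) * ((wgt α (s - ξ))⁻¹ * ξ ^ (-2 : ℝ)) := by gcongr
    _ = 4 * ξ ^ (-2 : ℝ) * (wgt α (s - ξ) * (wgt α (s - ξ))⁻¹)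
        + 4 * (wgt α (s - ξ))⁻¹ * (ξ ^ (1 + α) * ξ ^ (-2 : ℝ)) := by ring
    _ ≤ 4 * ξ ^ (-2 : ℝ) * 1 + 4 * (wgt α (s - ξ))⁻¹ * 1 := by
        rw [mul_inv_cancel₀ hp.ne']; gcongr
    _ = _ := by ring

/-- One-sided far-field estimate. -/
lemma half_far {α : ℝ} (h0 : 0 < α) (h1 : α < 1) (f g φ φ' : ℝ → ℝ) (s L M N : ℝ)
    (hM : 0 ≤ M) (hN : 0 ≤ N)
    (hf : ∀ x, HasDerivAt f (g x) x) (hg : Continuous g)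
    (hφ : ∀ x, 0 < x → HasDerivAt φ (φ' x) x) (hφ' : ContinuousOn φ' (Ioi 0))
    (hL : Tendsto φ atTop (𝓝 L))
    (hb1 : |φ 1| ≤ M) (hb2 : ∀ x, 1 < x → |x * (φ x - L)| ≤ M)
    (hb3 : ∀ x, 1 < x → |x * φ' x - φ x| ≤ M)
    (hfN : ∀ x, wgt α x * |f x| ≤ N) (hgN : ∀ x, wgt α x * |g x| ≤ N) :
    ∃ I : ℝ, Tendsto (fun R => (∫ ξ in (1 : ℝ)..R, (g (s - ξ) - g s) / ξ * φ ξ)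
        + g s * L * Real.log R) atTop (𝓝 I) ∧
      wgt α s * |I| ≤ (13 + 4 * ∫ x, (wgt α x)⁻¹) * (M * N) := by
  set B : ℝ → ℝ := fun ξ => -(f (s - ξ) * φ ξ / ξ) with hB
  set H : ℝ → ℝ := fun ξ => f (s - ξ) * (ξ * φ' ξ - φ ξ) / ξ ^ 2 - g s * (φ ξ - L) / ξ with hH
  have hws := wgt_pos α s
  have hfc : Continuous f := continuous_iff_continuousAt.2 fun x => (hf x).continuousAt
  have hφc : ContinuousOn φ (Ioi 0) := fun x hx => (hφ x hx).continuousAt.continuousWithinAt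
  have hfs : Continuous fun ξ => f (s - ξ) := hfc.comp (continuous_const.sub continuous_id)
  have hgs : Continuous fun ξ => g (s - ξ) := hg.comp (continuous_const.sub continuous_id)
  have hHc : ContinuousOn H (Ioi 0) := by
    refine ContinuousOn.sub ?_ ?_
    · refine ContinuousOn.div (hfs.continuousOn.mul ((continuousOn_id.mul hφ').sub hφc))
        (by fun_prop) ?_
      intro x hx; exact pow_ne_zero _ (ne_of_gt hx)
    · refine ContinuousOn.div (continuousOn_const.mul (hφc.sub continuousOn_const))
        continuousOn_id ?_
      intro x hx; exact ne_of_gt hx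
  have hFc : ContinuousOn (fun ξ => (g (s - ξ) - g s) / ξ * φ ξ) (Ioi 0) := by
    refine ContinuousOn.mul (ContinuousOn.div (by fun_prop) continuousOn_id ?_) hφc
    intro x hx; exact ne_of_gt hx
  have hsub : Ioi (1 : ℝ) ⊆ Ioi 0 := Ioi_subset_Ioi zero_le_one
  -- the dominating function
  set D : ℝ → ℝ := fun ξ => (M * N / wgt α s) * (5 * ξ ^ (-2 : ℝ) + 4 * (wgt α (s - ξ))⁻¹) with hD
  have hI1 : IntegrableOn (fun ξ : ℝ => ξ ^ (-2 : ℝ)) (Ioi 1) :=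
    integrableOn_Ioi_rpow_of_lt (by norm_num) one_pos
  have hI2 : Integrable (fun ξ : ℝ => (wgt α (s - ξ))⁻¹) :=
    (integrable_inv_wgt h0 h1).comp_sub_left s
  have hDi : IntegrableOn D (Ioi 1) :=
    ((hI1.const_mul 5).add (hI2.integrableOn.const_mul 4)).const_mul _
  have hHD : ∀ ξ ∈ Ioi (1 : ℝ), ‖H ξ‖ ≤ D ξ := by
    intro ξ hξ
    have hξ1 : (1 : ℝ) < ξ := hξ
    have hx : 0 < ξ := by linarith
    have hp := wgt_pos α (s - ξ)
    have hr : ξ ^ (-2 : ℝ) = (ξ ^ 2)⁻¹ := by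
      rw [Real.rpow_neg hx.le]; norm_num
    have hq : 0 < ξ ^ (-2 : ℝ) := by positivity
    have e1 : |f (s - ξ)| ≤ N * (wgt α (s - ξ))⁻¹ := by
      rw [← div_eq_mul_inv, le_div_iff₀ hp, mul_comm]; exact hfN _
    have e2 : |g s| ≤ N / wgt α s := by
      rw [le_div_iff₀ hws, mul_comm]; exact hgN _
    have e3 : |φ ξ - L| / ξ ≤ M * ξ ^ (-2 : ℝ) := by
      have := hb2 ξ hξ1
      rw [abs_mul, abs_of_pos hx] at this
      rw [hr, ← div_eq_mul_inv, div_le_div_iff₀ hx (by positivity)]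
      nlinarith
    have t1 : |f (s - ξ) * (ξ * φ' ξ - φ ξ) / ξ ^ 2|
        ≤ (M * N / wgt α s) * (4 * ξ ^ (-2 : ℝ) + 4 * (wgt α (s - ξ))⁻¹) := by
      calc |f (s - ξ) * (ξ * φ' ξ - φ ξ) / ξ ^ 2|
          = |f (s - ξ)| * |ξ * φ' ξ - φ ξ| * ξ ^ (-2 : ℝ) := by
            rw [abs_div, abs_mul, abs_of_pos (show 0 < ξ ^ 2 by positivity), hr, div_eq_mul_inv]
        _ ≤ (N * (wgt α (s - ξ))⁻¹) * M * ξ ^ (-2 : ℝ) := by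
            gcongr; exact hb3 ξ hξ1
        _ = (M * N / wgt α s) * (wgt α s * ((wgt α (s - ξ))⁻¹ * ξ ^ (-2 : ℝ))) := by
            field_simp
        _ ≤ _ := by
            gcongr
            exact kernel_bound h0 h1 s ξ hξ1.le
    have t2 : |g s * (φ ξ - L) / ξ| ≤ (M * N / wgt α s) * ξ ^ (-2 : ℝ) := by
      calc |g s * (φ ξ - L) / ξ| = |g s| * (|φ ξ - L| / ξ) := by
            rw [abs_div, abs_mul, abs_of_pos hx, mul_div_assoc]
        _ ≤ (N / wgt α s) * (M * ξ ^ (-2 : ℝ)) := by gcongr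
        _ = _ := by ring
    calc ‖H ξ‖ ≤ _ := norm_sub_le _ _
      _ ≤ _ := add_le_add t1 t2
      _ = D ξ := by rw [hD]; ring
  have hHi : IntegrableOn H (Ioi 1) := by
    refine Integrable.mono' hDi ((hHc.mono hsub).aestronglyMeasurable measurableSet_Ioi) ?_
    exact (ae_restrict_iff' measurableSet_Ioi).2 (Eventually.of_forall hHD)
  have hHle : |∫ ξ in Ioi (1 : ℝ), H ξ| ≤ ∫ ξ in Ioi (1 : ℝ), D ξ :=
    norm_integral_le_of_norm_le hDi
      ((ae_restrict_iff' measurableSet_Ioi).2 (Eventually.of_forall hHD))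
  have hDle : ∫ ξ in Ioi (1 : ℝ), D ξ ≤ (M * N / wgt α s) * (5 + 4 * ∫ x, (wgt α x)⁻¹) := by
    have e : ∫ ξ in Ioi (1 : ℝ), D ξ = (M * N / wgt α s) *
        (5 * (∫ ξ in Ioi (1 : ℝ), ξ ^ (-2 : ℝ)) + 4 * ∫ ξ in Ioi (1 : ℝ), (wgt α (s - ξ))⁻¹) := by
      rw [hD, integral_const_mul, integral_add (hI1.const_mul 5) (hI2.integrableOn.const_mul 4),
        integral_const_mul, integral_const_mul]
    rw [e, integral_Ioi_rpow_of_lt (by norm_num) one_pos]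
    have h3 : ∫ ξ in Ioi (1 : ℝ), (wgt α (s - ξ))⁻¹ ≤ ∫ x, (wgt α x)⁻¹ := by
      refine (setIntegral_le_integral hI2 (Eventually.of_forall fun x => ?_)).trans_eq ?_
      · exact (inv_pos.2 (wgt_pos _ _)).le
      · exact integral_sub_left_eq_self (fun x => (wgt α x)⁻¹) volume s
    have h4 : -(1 : ℝ) ^ ((-2 : ℝ) + 1) / (-2 + 1) = 1 := by norm_num
    rw [h4]
    gcongr
    linarith
  -- the integral identity
  have hid : ∀ R : ℝ, 1 ≤ R → (∫ ξ in (1 : ℝ)..R, (g (s - ξ) - g s) / ξ * φ ξ)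
        + g s * L * Real.log R = (∫ ξ in (1 : ℝ)..R, H ξ) + (B R - B 1) := by
    intro R hR
    have hsub2 : uIcc 1 R ⊆ Ioi (0 : ℝ) := by
      rw [uIcc_of_le hR]; intro x hx; exact lt_of_lt_of_le one_pos hx.1
    have i1 : IntervalIntegrable (fun ξ => (g (s - ξ) - g s) / ξ * φ ξ) volume 1 R :=
      (hFc.mono hsub2).intervalIntegrable
    have i2 : IntervalIntegrable H volume 1 R := (hHc.mono hsub2).intervalIntegrable
    have i3 : IntervalIntegrable (fun ξ : ℝ => g s * L * (1 / ξ)) volume 1 R := by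
      refine ContinuousOn.intervalIntegrable ?_
      refine continuousOn_const.mul (continuousOn_const.div continuousOn_id ?_)
      intro x hx; exact ne_of_gt (hsub2 hx)
    have hder : ∀ x ∈ uIcc 1 R, HasDerivAt B
        (((g (s - x) - g s) / x * φ x + g s * L * (1 / x)) - H x) x := by
      intro x hx
      have hx0 : 0 < x := hsub2 hx
      have d1 : HasDerivAt (fun ξ => f (s - ξ)) (-(g (s - x))) x := by
        have := (hf (s - x)).comp x ((hasDerivAt_id x).const_sub s)
        exact this.congr_deriv (by simp)
      have d2 := (((d1.mul (hφ x hx0)).div (hasDerivAt_id x) hx0.ne')).neg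
      refine d2.congr_deriv ?_
      simp only [hH, id, Pi.mul_apply]
      field_simp
      ring
    have := intervalIntegral.integral_eq_sub_of_hasDerivAt hder ((i1.add i3).sub i2)
    rw [intervalIntegral.integral_sub (i1.add i3) i2, intervalIntegral.integral_add i1 i3,
      intervalIntegral.integral_const_mul, integral_one_div_of_pos one_pos (by linarith),
      div_one] at this
    linarith
  have hBlim : Tendsto B atTop (𝓝 0) := by
    have hz : Tendsto (fun ξ => |φ ξ * ξ⁻¹|) atTop (𝓝 0) := by
      have := (hL.mul tendsto_inv_atTop_zero).abs
      simpa using this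
    have hz2 : Tendsto (fun ξ => N * |φ ξ * ξ⁻¹|) atTop (𝓝 0) := by
      simpa using hz.const_mul N
    refine squeeze_zero_norm (fun ξ => ?_) hz2
    have e1 : |f (s - ξ)| ≤ N := by
      have := hfN (s - ξ)
      nlinarith [one_le_wgt α (s - ξ), abs_nonneg (f (s - ξ))]
    rw [hB]
    simp only [Real.norm_eq_abs, abs_neg]
    rw [mul_div_assoc, abs_mul, div_eq_mul_inv]
    gcongr
  refine ⟨(∫ ξ in Ioi (1 : ℝ), H ξ) + (0 - B 1), ?_, ?_⟩
  · have hl := (intervalIntegral_tendsto_integral_Ioi 1 hHi tendsto_id).add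
      (hBlim.sub (tendsto_const_nhds (x := B 1)))
    refine hl.congr' ?_
    filter_upwards [eventually_ge_atTop 1] with R hR
    exact (hid R hR).symm
  · have hb : wgt α s * |B 1| ≤ 8 * (M * N) := by
      have hw := wgt_le h0 h1 s 1
      simp only [abs_one, Real.one_rpow] at hw
      have hw2 : wgt α s ≤ 8 * wgt α (s - 1) := by linarith [one_le_wgt α (s - 1)]
      have : |B 1| = |f (s - 1)| * |φ 1| := by simp [hB, abs_mul]
      rw [this]
      have hw3 := wgt_pos α (s - 1)
      calc wgt α s * (|f (s - 1)| * |φ 1|)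
          ≤ (8 * wgt α (s - 1)) * (|f (s - 1)| * M) := by gcongr
        _ = 8 * M * (wgt α (s - 1) * |f (s - 1)|) := by ring
        _ ≤ 8 * M * N := by gcongr; exact hfN _
        _ = _ := by ring
    have hh : wgt α s * |∫ ξ in Ioi (1 : ℝ), H ξ| ≤ M * N * (5 + 4 * ∫ x, (wgt α x)⁻¹) := by
      calc _ ≤ wgt α s * ((M * N / wgt α s) * (5 + 4 * ∫ x, (wgt α x)⁻¹)) := by
            gcongr; exact hHle.trans hDle
        _ = _ := by field_simp
    calc wgt α s * |(∫ ξ in Ioi (1 : ℝ), H ξ) + (0 - B 1)|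
        ≤ wgt α s * (|∫ ξ in Ioi (1 : ℝ), H ξ| + |B 1|) := by
          gcongr
          refine (abs_add_le _ _).trans ?_
          simp
      _ ≤ _ := by linarith

lemma abs_rpow_intervalIntegrable {α : ℝ} (h0 : 0 < α) :
    IntervalIntegrable (fun ξ : ℝ => |ξ| ^ (α - 1)) volume (-1) 1 := by
  have hp : IntervalIntegrable (fun ξ : ℝ => |ξ| ^ (α - 1)) volume 0 1 := by
    refine (intervalIntegral.intervalIntegrable_rpow' (a := 0) (b := 1)
      (show -1 < α - 1 by linarith)).congr ?_
    intro x hx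
    rw [uIoc_of_le zero_le_one] at hx
    simp only [abs_of_pos hx.1]
  have hn : IntervalIntegrable (fun ξ : ℝ => |ξ| ^ (α - 1)) volume (-0) (-1) := by
    have := (IntervalIntegrable.iff_comp_neg (by simp)).1 hp
    simpa using this
  rw [neg_zero] at hn
  exact hn.symm.trans hp

/-- The real-variable form of the estimate at one point. -/
lemma point_est {α : ℝ} (h0 : 0 < α) (h1 : α < 1) (f g Ψ Ψ' : ℝ → ℝ) (s L M N : ℝ)
    (hM : 0 ≤ M) (hN : 0 ≤ N)
    (hf : ∀ x, HasDerivAt f (g x) x) (hg : Continuous g)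
    (hΨ : ∀ x, x ≠ 0 → HasDerivAt Ψ (Ψ' x) x) (hΨ' : ContinuousOn Ψ' {(0 : ℝ)}ᶜ)
    (hL : Tendsto Ψ (cocompact ℝ) (𝓝 L))
    (hb1 : ∀ x, 0 < |x| → |x| ≤ 1 → |Ψ x| ≤ M)
    (hb2 : ∀ x, 1 < |x| → |x * (Ψ x - L)| ≤ M)
    (hb3 : ∀ x, 1 < |x| → |x * Ψ' x - Ψ x| ≤ M)
    (hfN : ∀ x, wgt α x * |f x| ≤ N) (hgN : ∀ x, wgt α x * |g x| ≤ N)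
    (hgH : ∀ x ξ, 0 < |ξ| → |ξ| ≤ 1 → wgt α x * |g (x - ξ) - g x| / |ξ| ^ α ≤ N) :
    ∃ I : ℝ, Tendsto (fun R => ∫ ξ in (-R)..R, (g (s - ξ) - g s) / ξ * Ψ ξ) atTop (𝓝 I) ∧
      wgt α s * |I| ≤ ((∫ ξ in (-1 : ℝ)..1, |ξ| ^ (α - 1))
        + 2 * (13 + 4 * ∫ x, (wgt α x)⁻¹)) * (M * N) := by
  set F : ℝ → ℝ := fun ξ => (g (s - ξ) - g s) / ξ * Ψ ξ with hF
  have hws := wgt_pos α s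
  have hΨc : ContinuousOn Ψ {(0 : ℝ)}ᶜ := fun x hx => (hΨ x hx).continuousAt.continuousWithinAt
  have hgs : Continuous fun ξ => g (s - ξ) := hg.comp (continuous_const.sub continuous_id)
  have hFc : ContinuousOn F {(0 : ℝ)}ᶜ := by
    refine ContinuousOn.mul (ContinuousOn.div (by fun_prop) continuousOn_id ?_) hΨc
    intro x hx; exact hx
  have hFm : AEStronglyMeasurable F volume := by
    have := hFc.aestronglyMeasurable (μ := volume) (measurableSet_singleton 0).compl
    rwa [restrict_compl_singleton] at this
  obtain ⟨hLb, hLt⟩ : Tendsto Ψ atBot (𝓝 L) ∧ Tendsto Ψ atTop (𝓝 L) := by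
    rw [cocompact_eq_atBot_atTop, tendsto_sup] at hL
    exact hL
  -- near field
  have hDi : IntervalIntegrable (fun ξ : ℝ => (M * N / wgt α s) * |ξ| ^ (α - 1)) volume (-1) 1 :=
    (abs_rpow_intervalIntegrable h0).const_mul _
  have hFD : ∀ ξ ∈ Ioc (-1 : ℝ) 1, ‖F ξ‖ ≤ (M * N / wgt α s) * |ξ| ^ (α - 1) := by
    intro ξ hξ
    rcases eq_or_ne ξ 0 with rfl | hne
    · have : F 0 = 0 := by simp [hF]
      rw [this, norm_zero]; positivity
    have hpos : 0 < |ξ| := abs_pos.2 hne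
    have hle : |ξ| ≤ 1 := abs_le.2 ⟨hξ.1.le, hξ.2⟩
    have hq : 0 < |ξ| ^ α := by positivity
    have e := hgH s ξ hpos hle
    rw [div_le_iff₀ hq] at e
    have e2 : |g (s - ξ) - g s| ≤ N * |ξ| ^ α / wgt α s := by
      rw [le_div_iff₀ hws]; linarith
    calc ‖F ξ‖ = |g (s - ξ) - g s| / |ξ| * |Ψ ξ| := by
          rw [hF]; simp only [Real.norm_eq_abs, abs_mul, abs_div]
      _ ≤ (N * |ξ| ^ α / wgt α s) / |ξ| * M := by
          gcongr; exact hb1 ξ hpos hle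
      _ = _ := by
          rw [Real.rpow_sub hpos, Real.rpow_one]; ring
  have hFi : IntervalIntegrable F volume (-1) 1 := by
    refine hDi.mono_fun' hFm.restrict ?_
    rw [uIoc_of_le (by norm_num)]
    exact (ae_restrict_iff' measurableSet_Ioc).2 (Eventually.of_forall hFD)
  have hnear : wgt α s * |∫ ξ in (-1 : ℝ)..1, F ξ|
      ≤ (∫ ξ in (-1 : ℝ)..1, |ξ| ^ (α - 1)) * (M * N) := by
    have := intervalIntegral.norm_integral_le_of_norm_le (a := -1) (b := 1) (by norm_num)
      (Eventually.of_forall hFD) hDi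
    rw [intervalIntegral.integral_const_mul, Real.norm_eq_abs] at this
    calc _ ≤ wgt α s * (M * N / wgt α s * ∫ ξ in (-1 : ℝ)..1, |ξ| ^ (α - 1)) := by gcongr
      _ = _ := by field_simp
  -- far field, right
  obtain ⟨I₁, hI₁, hI₁b⟩ := half_far h0 h1 f g Ψ Ψ' s L M N hM hN hf hg
    (fun x hx => hΨ x hx.ne') (hΨ'.mono fun x hx => ne_of_gt hx) hLt (hb1 1 (by simp) (by simp))
    (fun x hx => hb2 x (lt_of_lt_of_le hx (le_abs_self x)))
    (fun x hx => hb3 x (lt_of_lt_of_le hx (le_abs_self x))) hfN hgN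
  -- far field, left
  obtain ⟨I₂, hI₂, hI₂b⟩ := half_far h0 h1 (fun x => f (-x)) (fun x => -g (-x))
    (fun x => Ψ (-x)) (fun x => -Ψ' (-x)) (-s) L M N hM hN
    (fun x => by
      have := (hf (-x)).comp x (hasDerivAt_neg x)
      exact this.congr_deriv (by simp)) (by fun_prop)
    (fun x hx => by
      have := (hΨ (-x) (by simpa using hx.ne')).comp x (hasDerivAt_neg x)
      exact this.congr_deriv (by simp))
    ((hΨ'.comp continuous_neg.continuousOn (fun x hx => by
      have : (0 : ℝ) < x := hx
      simpa using this.ne')).neg)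
    (hLb.comp tendsto_neg_atTop_atBot) (hb1 (-1) (by simp) (by simp))
    (fun x hx => by
      have := hb2 (-x) (by rw [abs_neg]; exact lt_of_lt_of_le hx (le_abs_self x))
      rwa [neg_mul, abs_neg] at this)
    (fun x hx => by
      have := hb3 (-x) (by rw [abs_neg]; exact lt_of_lt_of_le hx (le_abs_self x))
      rwa [neg_mul_comm] at this)
    (fun x => by rw [← wgt_neg]; exact hfN _)
    (fun x => by rw [← wgt_neg, abs_neg]; exact hgN _)
  rw [wgt_neg] at hI₂b
  refine ⟨(∫ ξ in (-1 : ℝ)..1, F ξ) + (I₁ + I₂), ?_, ?_⟩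
  · refine ((hI₁.add hI₂).const_add (∫ ξ in (-1 : ℝ)..1, F ξ)).congr' ?_
    filter_upwards [eventually_ge_atTop 1] with R hR
    have iR : IntervalIntegrable F volume 1 R := by
      refine (hFc.mono ?_).intervalIntegrable
      rw [uIcc_of_le hR]
      intro x hx
      have : (0 : ℝ) < x := lt_of_lt_of_le one_pos hx.1
      exact this.ne'
    have iL : IntervalIntegrable F volume (-R) (-1) := by
      refine (hFc.mono ?_).intervalIntegrable
      rw [uIcc_of_le (by linarith)]
      intro x hx
      have : x < (0 : ℝ) := by linarith [hx.2]
      exact this.ne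
    have e1 := intervalIntegral.integral_add_adjacent_intervals (iL.trans hFi) iR
    have e2 := intervalIntegral.integral_add_adjacent_intervals iL hFi
    have e3 : ∫ ξ in (1 : ℝ)..R, (-g (-(-s - ξ)) - -g (- -s)) / ξ * Ψ (-ξ)
        = ∫ ξ in (-R)..(-1), F ξ := by
      rw [← intervalIntegral.integral_comp_neg]
      refine intervalIntegral.integral_congr fun ξ _ => ?_
      simp only [hF]
      rw [neg_neg, show -(-s - ξ) = s - -ξ by ring, div_neg, ← neg_div]
      ring
    rw [e3, neg_neg]
    rw [← e1, ← e2]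
    ring
  · calc wgt α s * |(∫ ξ in (-1 : ℝ)..1, F ξ) + (I₁ + I₂)|
        ≤ wgt α s * (|∫ ξ in (-1 : ℝ)..1, F ξ| + (|I₁| + |I₂|)) := by
          gcongr
          exact (abs_add_le _ _).trans (by gcongr; exact abs_add_le _ _)
      _ ≤ _ := by linarith

/-- the basic weighted estimate `‖T_Φ f‖₀* ≤ C ⦀Φ⦀₀ ‖f‖_{1,α}*`. -/
theorem TPhi_basic_estimate :
    ∀ α : ℝ, 0 < α → α < 1 →
    ∃ C : ℝ, 0 < C ∧
      ∀ (f : ℝ → ℝ) (Φ : ℝ → ℝ → ℝ) (Φinf : ℝ → ℝ),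
        CStar α 1 f → MemW0 Φ Φinf →
        ∃ Tf : ℝ → ℝ,
          (∀ s, Tendsto (fun R => TInt Φ f s R) atTop (𝓝 (Tf s))) ∧
          wSup α Tf ≤ ENNReal.ofReal C * WNorm0 Φ Φinf * wNorm α 1 f := by
  intro α h0 h1
  set J : ℝ := (∫ ξ in (-1 : ℝ)..1, |ξ| ^ (α - 1)) + 2 * (13 + 4 * ∫ x, (wgt α x)⁻¹) with hJ
  have hJpos : 0 < J := by
    have a1 : 0 ≤ ∫ ξ in (-1 : ℝ)..1, |ξ| ^ (α - 1) :=
      intervalIntegral.integral_nonneg (by norm_num) (fun x _ => by positivity)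
    have a2 : 0 ≤ ∫ x, (wgt α x)⁻¹ :=
      integral_nonneg fun x => (inv_pos.2 (wgt_pos α x)).le
    linarith
  refine ⟨J, hJpos, ?_⟩
  intro f Φ Φinf hfC hΦ
  obtain ⟨hfd, hfin⟩ := hfC
  obtain ⟨hΦd, hΦl, hΦn⟩ := hΦ
  set M := (WNorm0 Φ Φinf).toReal with hMdef
  set N := (wNorm α 1 f).toReal with hNdef
  have hM : ENNReal.ofReal M = WNorm0 Φ Φinf := ENNReal.ofReal_toReal hΦn.ne
  have hN : ENNReal.ofReal N = wNorm α 1 f := ENNReal.ofReal_toReal hfin.ne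
  have hM0 : 0 ≤ M := ENNReal.toReal_nonneg
  have hN0 : 0 ≤ N := ENNReal.toReal_nonneg
  have hder : ∀ x, HasDerivAt f (deriv f x) x := fun x =>
    ((hfd.differentiable (by simp)) x).hasDerivAt
  have hgc : Continuous (deriv f) := hfd.continuous_deriv (by simp)
  have bj : ∀ (j : Fin (1 + 1)) x, wgt α x * |iteratedDeriv j.1 f x| ≤ N := by
    intro j x
    rw [← ENNReal.ofReal_le_ofReal_iff hN0, hN]
    refine le_trans ?_ (le_self_add)
    exact le_iSup₂ (f := fun (s : ℝ) (j : Fin (1 + 1)) =>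
      ENNReal.ofReal ((1 + |s| ^ (1 + α)) * |iteratedDeriv j.1 f s|)) x j
  have hfN : ∀ x, wgt α x * |f x| ≤ N := fun x => by simpa using bj 0 x
  have hgN : ∀ x, wgt α x * |deriv f x| ≤ N := fun x => by
    simpa [iteratedDeriv_one] using bj 1 x
  have hgH : ∀ x ξ, 0 < |ξ| → |ξ| ≤ 1 →
      wgt α x * |deriv f (x - ξ) - deriv f x| / |ξ| ^ α ≤ N := by
    intro x ξ hp hl
    rw [← ENNReal.ofReal_le_ofReal_iff hN0, hN]
    refine le_trans ?_ (le_add_self)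
    rw [iteratedDeriv_one]
    exact le_iSup₂ (f := fun (s : ℝ) (ξ : {ξ : ℝ // 0 < |ξ| ∧ |ξ| ≤ 1}) =>
      ENNReal.ofReal ((1 + |s| ^ (1 + α)) * |deriv f (s - ξ.1) - deriv f s| / |ξ.1| ^ α))
      x ⟨ξ, hp, hl⟩
  have hb1 : ∀ s x, 0 < |x| → |x| ≤ 1 → |Φ x s| ≤ M := by
    intro s x hp hl
    rw [← ENNReal.ofReal_le_ofReal_iff hM0, hM]
    refine le_trans ?_ (le_self_add)
    exact le_iSup₂ (f := fun (s : ℝ) (ξ : {ξ : ℝ // 0 < |ξ| ∧ |ξ| ≤ 1}) =>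
      ENNReal.ofReal |Φ ξ.1 s|) s ⟨x, hp, hl⟩
  have hb23 : ∀ s x, 1 < |x| → |barW Φ Φinf x s| + |tildeW Φ x s| ≤ M := by
    intro s x hp
    rw [← ENNReal.ofReal_le_ofReal_iff hM0, hM]
    refine le_trans ?_ (le_add_self)
    exact le_iSup₂ (f := fun (s : ℝ) (ξ : {ξ : ℝ // 1 < |ξ|}) =>
      ENNReal.ofReal (|barW Φ Φinf ξ.1 s| + |tildeW Φ ξ.1 s|)) s ⟨x, hp⟩
  have hop : IsOpen ({(0 : ℝ)}ᶜ) := isOpen_compl_singleton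
  have main := fun s => point_est h0 h1 f (deriv f) (fun ξ => Φ ξ s)
    (deriv fun ξ => Φ ξ s) s (Φinf s) M N hM0 hN0 hder hgc
    (fun x hx => (((hΦd s).differentiableOn (by simp)).differentiableAt
      (hop.mem_nhds hx)).hasDerivAt)
    ((hΦd s).continuousOn_deriv_of_isOpen hop (by simp)) (hΦl s) (hb1 s)
    (fun x hx => (le_add_of_nonneg_right (abs_nonneg _)).trans (hb23 s x hx))
    (fun x hx => (le_add_of_nonneg_left (abs_nonneg _)).trans (hb23 s x hx)) hfN hgN hgH
  choose I hI hIb using main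
  refine ⟨fun s => (1 / (2 * Real.pi)) * I s, fun s => (hI s).const_mul _, ?_⟩
  rw [← hM, ← hN, ← ENNReal.ofReal_mul hJpos.le, ← ENNReal.ofReal_mul (by positivity)]
  refine iSup_le fun s => ENNReal.ofReal_le_ofReal ?_
  have hpi : |1 / (2 * Real.pi)| ≤ 1 := by
    rw [abs_of_pos (by positivity), div_le_one (by positivity)]
    linarith [Real.pi_gt_three]
  have hw := wgt_pos α s
  calc wgt α s * |1 / (2 * Real.pi) * I s|
      = |1 / (2 * Real.pi)| * (wgt α s * |I s|) := by rw [abs_mul]; ring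
    _ ≤ 1 * (wgt α s * |I s|) := by gcongr
    _ = wgt α s * |I s| := one_mul _
    _ ≤ J * (M * N) := hIb s
    _ = J * M * N := by ring
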